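/- Let Ω be a locally compact Hausdorff topological space with Borel σ-algebra B. Let m and m_n (n ∈ ℕ) be finite nonnegative Borel measures on Ω, with m Radon. Let f and f_n (n ∈ ℕ) be Borel measurable real-valued functions on Ω. Suppose that: (i) f_n → f m-almost everywhere; (ii) f is continuous and bounded; (iii) (f_n) has uniformly absolutely continuous (m_n)-integrals on Ω; (iv) (m_n) converges vaguely to m and is uniformly absolutely continuous with respect to m. Then lim_n ∫_A f_n dm_n = ∫_A f dm for every Borel set A. -/

import Mathlib

open MeasureTheory Filter Topology

/-!
Inner regularity of the limit measure and Urysohn's lemma approximate the indicator of a Borel set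
by a compactly supported continuous function, off a set which uniform absolute continuity makes
small for all the measures at once; so vague convergence upgrades to convergence on every Borel
set. What remains is Vitali's theorem for a setwise convergent sequence of measures. By Egorov's
theorem there is a single simple function which is `L¹`-close to `fₙ` under `mₙ` for all large `n`;
by Fatou's lemma it is equally close to `f` under `m`, and integrals of simple functions converge
by setwise convergence.
-/

open scoped ENNReal NNReal CompactlySupported

/-- A family of measures `μs n` is uniformly absolutely continuous with respect to `μ`: sets of
small `μ`-measure have small `μs n`-measure, uniformly in `n`. -/
def UniformlyAbsolutelyContinuous {Ω ι : Type*} [MeasurableSpace Ω] (μs : ι → Measure Ω)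
    (μ : Measure Ω) : Prop :=
  ∀ ε : ℝ, 0 < ε → ∃ δ : ℝ, 0 < δ ∧ ∀ s : Set Ω, MeasurableSet s →
    μ s < ENNReal.ofReal δ → ∀ n, μs n s < ENNReal.ofReal ε

/-- The functions `fs n` have uniformly absolutely continuous `μs n`-integrals. The integral of
the norm is a lower Lebesgue integral, so that the condition forces it to be finite on sets of
small measure. -/
def UniformlyAbsolutelyContinuousIntegrals {Ω ι E : Type*} [MeasurableSpace Ω]
    [NormedAddCommGroup E] (fs : ι → Ω → E) (μs : ι → Measure Ω) : Prop :=
  ∀ ε : ℝ, 0 < ε → ∃ δ : ℝ, 0 < δ ∧ ∀ n, ∀ s : Set Ω, MeasurableSet s →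
    μs n s < ENNReal.ofReal δ → ∫⁻ x in s, ‖fs n x‖ₑ ∂(μs n) < ENNReal.ofReal ε

lemma uniformlyAbsolutelyContinuousIntegrals_of_integral_norm {Ω ι E : Type*} [MeasurableSpace Ω]
    [NormedAddCommGroup E] {fs : ι → Ω → E} {μs : ι → Measure Ω}
    (hint : ∀ n, Integrable (fs n) (μs n))
    (h : ∀ ε : ℝ, 0 < ε → ∃ δ : ℝ, 0 < δ ∧ ∀ n, ∀ s : Set Ω, MeasurableSet s →
      μs n s < ENNReal.ofReal δ → ∫ x in s, ‖fs n x‖ ∂(μs n) < ε) :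
    UniformlyAbsolutelyContinuousIntegrals fs μs := by
  intro ε hε
  obtain ⟨δ, hδ, hδε⟩ := h ε hε
  refine ⟨δ, hδ, fun n s hs hsδ => ?_⟩
  rw [← ofReal_integral_norm_eq_lintegral_enorm (hint n).integrableOn]
  exact (ENNReal.ofReal_lt_ofReal_iff hε).2 (hδε n s hs hsδ)

lemma tendsto_of_forall_exists_tendsto_dist_le {ι X : Type*} [PseudoMetricSpace X] {l : Filter ι}
    {u : ι → X} {x : X}
    (h : ∀ ε : ℝ, 0 < ε → ∃ (v : ι → X) (y : X), Tendsto v l (𝓝 y) ∧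
      (∀ᶠ n in l, dist (u n) (v n) ≤ ε) ∧ dist x y ≤ ε) :
    Tendsto u l (𝓝 x) := by
  rw [Metric.tendsto_nhds]
  intro ε hε
  obtain ⟨v, y, hv, huv, hxy⟩ := h (ε / 3) (by positivity)
  filter_upwards [huv, Metric.tendsto_nhds.1 hv (ε / 3) (by positivity)] with n huv_n hvy_n
  calc dist (u n) x ≤ dist (u n) (v n) + dist (v n) y + dist y x := dist_triangle4 ..
    _ < ε := by rw [dist_comm y x]; linarith

section IntegralEDist

variable {Ω : Type*} [MeasurableSpace Ω] {μ : Measure Ω}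

lemma edist_integral_measureReal_le_of_edist_indicator_le [IsFiniteMeasure μ] {A s : Set Ω}
    (hA : MeasurableSet A) (hs : MeasurableSet s) {g : Ω → ℝ} (hg : Integrable g μ)
    (hgA : ∀ x, edist (g x) (A.indicator 1 x) ≤ s.indicator 1 x) :
    edist (∫ x, g x ∂μ) (μ.real A) ≤ μ s := by
  rw [← integral_indicator_one hA]
  calc edist (∫ x, g x ∂μ) (∫ x, A.indicator 1 x ∂μ)
      ≤ ∫⁻ x, edist (g x) (A.indicator 1 x) ∂μ :=
        edist_integral_le_lintegral_edist hg ((integrable_const 1).indicator hA)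
    _ ≤ ∫⁻ x, s.indicator 1 x ∂μ := lintegral_mono hgA
    _ = μ s := lintegral_indicator_one hs

variable {E : Type*} [NormedAddCommGroup E] {f g : Ω → E}

lemma integrable_of_lintegral_edist_ne_top (hf : AEStronglyMeasurable f μ)
    (hg : Integrable g μ) (hfg : ∫⁻ x, edist (f x) (g x) ∂μ ≠ ∞) : Integrable f μ := by
  have hsub : Integrable (f - g) μ :=
    ⟨hf.sub hg.1, by simpa [hasFiniteIntegral_iff_enorm, ← edist_eq_enorm_sub] using hfg.lt_top⟩
  simpa using hsub.add hg

lemma dist_setIntegral_le_of_lintegral_edist_le [NormedSpace ℝ E] {A : Set Ω}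
    (hf : AEStronglyMeasurable f μ) (hg : Integrable g μ) {ε : ℝ} (hε : 0 ≤ ε)
    (hfg : ∫⁻ x, edist (f x) (g x) ∂μ ≤ ENNReal.ofReal ε) :
    dist (∫ x in A, f x ∂μ) (∫ x in A, g x ∂μ) ≤ ε := by
  have hfi := integrable_of_lintegral_edist_ne_top hf hg (ne_top_of_le_ne_top (by simp) hfg)
  rw [← edist_le_ofReal hε]
  calc edist (∫ x in A, f x ∂μ) (∫ x in A, g x ∂μ)
      ≤ ∫⁻ x in A, edist (f x) (g x) ∂μ :=
        edist_integral_le_lintegral_edist hfi.integrableOn hg.integrableOn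
    _ ≤ ∫⁻ x, edist (f x) (g x) ∂μ := setLIntegral_le_lintegral _ _
    _ ≤ ENNReal.ofReal ε := hfg

end IntegralEDist

section VagueConvergence

variable {Ω : Type*} [TopologicalSpace Ω] [LocallyCompactSpace Ω] [R1Space Ω]
  [MeasurableSpace Ω] [BorelSpace Ω] {μ : Measure Ω} [IsFiniteMeasure μ]
  [μ.InnerRegularCompactLTTop] {A : Set Ω}

lemma exists_compactlySupported_edist_indicator_le (hA : MeasurableSet A) {ε : ℝ≥0∞}
    (hε : ε ≠ 0) :
    ∃ (g : C_c(Ω, ℝ)) (s : Set Ω), MeasurableSet s ∧ μ s < ε ∧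
      ∀ x, edist (g x) (A.indicator 1 x) ≤ s.indicator 1 x := by
  have hε₂ : ε / 2 ≠ 0 := (ENNReal.half_pos hε).ne'
  obtain ⟨K, hKA, hK, hKcl, hμK⟩ :=
    hA.exists_isCompact_isClosed_sdiff_lt (measure_ne_top μ _) hε₂
  obtain ⟨L, hLA, -, hLcl, hμL⟩ :=
    hA.compl.exists_isCompact_isClosed_sdiff_lt (measure_ne_top μ _) hε₂
  have hKL : Disjoint K L := Disjoint.mono hKA hLA disjoint_compl_right
  obtain ⟨g, hgK, hgL, hg, hg01⟩ := exists_continuous_one_zero_of_isCompact hK hLcl hKL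
  refine ⟨⟨g, hg⟩, A \ K ∪ Aᶜ \ L, (hA.diff hKcl.measurableSet).union
    (hA.compl.diff hLcl.measurableSet), ?_, fun x => ?_⟩
  · calc μ (A \ K ∪ Aᶜ \ L) ≤ μ (A \ K) + μ (Aᶜ \ L) := measure_union_le _ _
      _ < ε / 2 + ε / 2 := ENNReal.add_lt_add hμK hμL
      _ = ε := ENNReal.add_halves ε
  · change edist (g x) _ ≤ _
    by_cases hxK : x ∈ K
    · simp [hgK hxK, hKA hxK]
    by_cases hxL : x ∈ L
    · simp [hgL hxL, show x ∉ A from hLA hxL]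
    have hA01 : A.indicator (1 : Ω → ℝ) x ∈ Set.Icc 0 1 := by
      by_cases hx : x ∈ A <;> simp [hx]
    have hxs : x ∈ A \ K ∪ Aᶜ \ L := by
      by_cases hx : x ∈ A <;> simp [hx, hxK, hxL]
    rw [Set.indicator_of_mem hxs, Pi.one_apply, ← ENNReal.ofReal_one, edist_le_ofReal zero_le_one]
    simpa using Real.dist_le_of_mem_Icc (hg01 x) hA01

lemma UniformlyAbsolutelyContinuous.tendsto_measure_of_vague {ι : Type*} {l : Filter ι}
    {μs : ι → Measure Ω} [∀ n, IsFiniteMeasure (μs n)]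
    (huac : UniformlyAbsolutelyContinuous μs μ)
    (hvague : ∀ g : C_c(Ω, ℝ), Tendsto (fun n => ∫ x, g x ∂(μs n)) l (𝓝 (∫ x, g x ∂μ)))
    (hA : MeasurableSet A) :
    Tendsto (fun n => μs n A) l (𝓝 (μ A)) := by
  rw [← ENNReal.tendsto_toReal_iff (fun n => measure_ne_top (μs n) A) (measure_ne_top μ A)]
  refine tendsto_of_forall_exists_tendsto_dist_le fun ε hε => ?_
  obtain ⟨δ, hδ, hδε⟩ := huac ε hε
  obtain ⟨g, s, hs, hμs, hgA⟩ := exists_compactlySupported_edist_indicator_le (μ := μ) hA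
    (ENNReal.ofReal_pos.2 (lt_min hδ hε)).ne'
  rw [ENNReal.ofReal_min, lt_min_iff] at hμs
  have dist_le (ν : Measure Ω) [IsFiniteMeasure ν] (hν : ν s < ENNReal.ofReal ε) :
      dist (ν.real A) (∫ x, g x ∂ν) ≤ ε := by
    rw [dist_comm, ← edist_le_ofReal hε.le]
    exact (edist_integral_measureReal_le_of_edist_indicator_le hA hs
      (g.continuous.integrable_of_hasCompactSupport g.hasCompactSupport) hgA).trans hν.le
  exact ⟨_, _, hvague g, .of_forall fun n => dist_le (μs n) (hδε s hs hμs.1 n),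
    dist_le μ hμs.2⟩

end VagueConvergence

section SetwiseConvergence

variable {Ω : Type*} [MeasurableSpace Ω] {μ : Measure Ω}

section Filter

variable {ι : Type*} {l : Filter ι} {μs : ι → Measure Ω}

lemma lintegral_le_liminf_of_tendsto_measure [l.NeBot]
    (hμ : ∀ s, MeasurableSet s → Tendsto (fun n => μs n s) l (𝓝 (μ s))) {g : Ω → ℝ≥0∞}
    (hg : Measurable g) :
    ∫⁻ x, g x ∂μ ≤ liminf (fun n => ∫⁻ x, g x ∂(μs n)) l := by
  rw [lintegral_eq_iSup_eapprox_lintegral hg]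
  refine iSup_le fun k => ?_
  have htendsto : Tendsto (fun n => (SimpleFunc.eapprox g k).lintegral (μs n)) l
      (𝓝 ((SimpleFunc.eapprox g k).lintegral μ)) := by
    refine tendsto_finsetSum _ fun c hc => ENNReal.Tendsto.const_mul
      (hμ _ (SimpleFunc.measurableSet_fiber _ c)) (Or.inr ?_)
    obtain ⟨x, rfl⟩ := SimpleFunc.mem_range.1 hc
    exact (SimpleFunc.eapprox_lt_top g k x).ne
  rw [← htendsto.liminf_eq]
  exact liminf_le_liminf (.of_forall fun n => lintegral_eapprox_le_lintegral hg k)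

lemma tendsto_setIntegral_simpleFunc_of_tendsto_measure {E : Type*} [NormedAddCommGroup E]
    [NormedSpace ℝ E] [CompleteSpace E] [IsFiniteMeasure μ] [∀ n, IsFiniteMeasure (μs n)]
    (hμ : ∀ s, MeasurableSet s → Tendsto (fun n => μs n s) l (𝓝 (μ s))) (φ : SimpleFunc Ω E)
    {A : Set Ω} (hA : MeasurableSet A) :
    Tendsto (fun n => ∫ x in A, φ x ∂(μs n)) l (𝓝 (∫ x in A, φ x ∂μ)) := by
  simp only [φ.integral_eq_sum φ.integrable_of_isFiniteMeasure]
  refine tendsto_finsetSum _ fun y _ => Tendsto.smul_const ?_ y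
  simp only [measureReal_restrict_apply (φ.measurableSet_fiber y)]
  exact (ENNReal.tendsto_toReal (measure_ne_top μ _)).comp
    (hμ _ ((φ.measurableSet_fiber y).inter hA))

end Filter

variable {μs : ℕ → Measure Ω}

lemma lintegral_liminf_le_of_tendsto_measure
    (hμ : ∀ s, MeasurableSet s → Tendsto (fun n => μs n s) atTop (𝓝 (μ s)))
    {gs : ℕ → Ω → ℝ≥0∞} (hgs : ∀ n, Measurable (gs n)) :
    ∫⁻ x, liminf (fun n => gs n x) atTop ∂μ ≤ liminf (fun n => ∫⁻ x, gs n x ∂(μs n)) atTop := by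
  have hmeas (N : ℕ) : Measurable fun x => ⨅ n ≥ N, gs n x :=
    .biInf _ (Set.to_countable _) fun n _ => hgs n
  have hmono : Monotone fun (N : ℕ) (x : Ω) => ⨅ n ≥ N, gs n x := fun _ _ hMN _ =>
    biInf_mono fun _ hn => hMN.trans hn
  simp only [liminf_eq_iSup_iInf_of_nat (u := fun n => gs n _)]
  rw [lintegral_iSup hmeas hmono]
  refine iSup_le fun N => (lintegral_le_liminf_of_tendsto_measure hμ (hmeas N)).trans ?_
  refine liminf_le_liminf ?_
  filter_upwards [eventually_ge_atTop N] with n hn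
  exact lintegral_mono fun x => biInf_le _ hn

variable {E : Type*} [NormedAddCommGroup E] {fs : ℕ → Ω → E} {f : Ω → E}

lemma exists_simpleFunc_eventually_dist_lt [IsFiniteMeasure μ]
    (hfs : ∀ n, StronglyMeasurable (fs n))
    (hlim : ∀ᵐ x ∂μ, Tendsto (fun n => fs n x) atTop (𝓝 (f x)))
    {δ η : ℝ} (hδ : 0 < δ) (hη : 0 < η) :
    ∃ (B : Set Ω) (φ : SimpleFunc Ω E), MeasurableSet B ∧ μ B < ENNReal.ofReal δ ∧
      (∀ x ∈ B, φ x = 0) ∧ ∀ᶠ n in atTop, ∀ x ∉ B, dist (fs n x) (φ x) < η := by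
  obtain ⟨g, hg, hfg⟩ := exists_stronglyMeasurable_limit_of_tendsto_ae
    (fun n => (hfs n).aestronglyMeasurable) (hlim.mono fun x hx => ⟨f x, hx⟩)
  obtain ⟨B, hB, hμB, hunif⟩ := tendstoUniformlyOn_of_ae_tendsto'
    (fun n => (hfs n).prodMk (hg.approx n).stronglyMeasurable) (hg.prodMk hg)
    (hfg.mono fun x hx => hx.prodMk_nhds (hg.tendsto_approx x)) (half_pos hδ)
  have hclose := Metric.tendstoUniformlyOn_iff.1 hunif (η / 2) (half_pos hη)
  simp only [Prod.dist_eq, max_lt_iff] at hclose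
  obtain ⟨k, hk⟩ := hclose.exists
  refine ⟨B, (hg.approx k).restrict Bᶜ, hB,
    hμB.trans_lt ((ENNReal.ofReal_lt_ofReal_iff hδ).2 (half_lt_self hδ)),
    fun x hx => by simp [SimpleFunc.restrict_apply, hB.compl, hx], ?_⟩
  filter_upwards [hclose] with n hn x hx
  rw [SimpleFunc.restrict_apply _ hB.compl, Set.indicator_of_mem hx]
  calc dist (fs n x) (hg.approx k x) ≤ dist (g x) (fs n x) + dist (g x) (hg.approx k x) :=
        dist_triangle_left ..
    _ < η := by linarith [(hn x hx).1, (hk x hx).2]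

lemma UniformlyAbsolutelyContinuousIntegrals.exists_simpleFunc_eventually_lintegral_edist_le
    [IsFiniteMeasure μ] (hint : UniformlyAbsolutelyContinuousIntegrals fs μs)
    (huac : UniformlyAbsolutelyContinuous μs μ) (hfs : ∀ n, StronglyMeasurable (fs n))
    (hlim : ∀ᵐ x ∂μ, Tendsto (fun n => fs n x) atTop (𝓝 (f x)))
    {M : ℝ≥0} (hM : ∀ᶠ n in atTop, μs n Set.univ ≤ M) {ε : ℝ} (hε : 0 < ε) :
    ∃ φ : SimpleFunc Ω E,
      ∀ᶠ n in atTop, ∫⁻ x, edist (fs n x) (φ x) ∂(μs n) ≤ ENNReal.ofReal ε := by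
  obtain ⟨δ, hδ, hδε⟩ := hint (ε / 2) (half_pos hε)
  obtain ⟨γ, hγ, hγδ⟩ := huac δ hδ
  set η : ℝ := ε / (2 * (M + 1))
  have hη : 0 < η := by positivity
  have hηM : η * M ≤ ε / 2 := by
    calc η * M ≤ η * (M + 1) := by gcongr; linarith
      _ = ε / 2 := by simp only [η]; field_simp
  obtain ⟨B, φ, hB, hμB, hφB, hφ⟩ := exists_simpleFunc_eventually_dist_lt hfs hlim hγ hη
  refine ⟨φ, ?_⟩
  filter_upwards [hφ, hM] with n hφn hMn
  have on_bad_set : ∫⁻ x in B, edist (fs n x) (φ x) ∂(μs n) ≤ ENNReal.ofReal (ε / 2) := by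
    rw [setLIntegral_congr_fun hB fun x hx => by rw [hφB x hx, edist_zero_right]]
    exact (hδε n B hB (hγδ B hB hμB n)).le
  have off_bad_set : ∫⁻ x in Bᶜ, edist (fs n x) (φ x) ∂(μs n) ≤ ENNReal.ofReal (ε / 2) :=
    calc ∫⁻ x in Bᶜ, edist (fs n x) (φ x) ∂(μs n)
        ≤ ∫⁻ _ in Bᶜ, ENNReal.ofReal η ∂(μs n) := setLIntegral_mono measurable_const
          fun x hx => (edist_le_ofReal hη.le).2 (hφn x hx).le
      _ = ENNReal.ofReal η * μs n Bᶜ := setLIntegral_const _ _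
      _ ≤ ENNReal.ofReal η * M := by gcongr; exact (measure_mono (Set.subset_univ _)).trans hMn
      _ = ENNReal.ofReal (η * M) := by
        rw [ENNReal.ofReal_mul hη.le, ENNReal.ofReal_coe_nnreal]
      _ ≤ ENNReal.ofReal (ε / 2) := ENNReal.ofReal_le_ofReal hηM
  calc ∫⁻ x, edist (fs n x) (φ x) ∂(μs n)
      = ∫⁻ x in B, edist (fs n x) (φ x) ∂(μs n) + ∫⁻ x in Bᶜ, edist (fs n x) (φ x) ∂(μs n) :=
        (lintegral_add_compl _ hB).symm
    _ ≤ ENNReal.ofReal (ε / 2) + ENNReal.ofReal (ε / 2) := add_le_add on_bad_set off_bad_set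
    _ = ENNReal.ofReal ε := by
      rw [← ENNReal.ofReal_add (half_pos hε).le (half_pos hε).le, add_halves]

lemma lintegral_edist_le_of_tendsto_measure
    (hμ : ∀ s, MeasurableSet s → Tendsto (fun n => μs n s) atTop (𝓝 (μ s)))
    (hfs : ∀ n, StronglyMeasurable (fs n))
    (hlim : ∀ᵐ x ∂μ, Tendsto (fun n => fs n x) atTop (𝓝 (f x)))
    {g : Ω → E} (hg : StronglyMeasurable g) {c : ℝ≥0∞}
    (hfg : ∀ᶠ n in atTop, ∫⁻ x, edist (fs n x) (g x) ∂(μs n) ≤ c) :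
    ∫⁻ x, edist (f x) (g x) ∂μ ≤ c := by
  have hliminf : ∀ᵐ x ∂μ, liminf (fun n => edist (fs n x) (g x)) atTop = edist (f x) (g x) :=
    hlim.mono fun x hx => (hx.edist tendsto_const_nhds).liminf_eq
  rw [← lintegral_congr_ae hliminf]
  calc ∫⁻ x, liminf (fun n => edist (fs n x) (g x)) atTop ∂μ
      ≤ liminf (fun n => ∫⁻ x, edist (fs n x) (g x) ∂(μs n)) atTop :=
        lintegral_liminf_le_of_tendsto_measure hμ fun n =>
          ((hfs n).edist hg).measurable
    _ ≤ c := liminf_le_of_frequently_le' hfg.frequently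

theorem UniformlyAbsolutelyContinuousIntegrals.integrable_and_tendsto_setIntegral
    [NormedSpace ℝ E] [CompleteSpace E] [IsFiniteMeasure μ] [∀ n, IsFiniteMeasure (μs n)]
    (hint : UniformlyAbsolutelyContinuousIntegrals fs μs)
    (huac : UniformlyAbsolutelyContinuous μs μ)
    (hμ : ∀ s, MeasurableSet s → Tendsto (fun n => μs n s) atTop (𝓝 (μ s)))
    (hfs : ∀ n, StronglyMeasurable (fs n))
    (hlim : ∀ᵐ x ∂μ, Tendsto (fun n => fs n x) atTop (𝓝 (f x))) :
    Integrable f μ ∧ ∀ A, MeasurableSet A →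
      Tendsto (fun n => ∫ x in A, fs n x ∂(μs n)) atTop (𝓝 (∫ x in A, f x ∂μ)) := by
  have hf : AEStronglyMeasurable f μ :=
    aestronglyMeasurable_of_tendsto_ae atTop (fun n => (hfs n).aestronglyMeasurable) hlim
  obtain ⟨M, hM⟩ : ∃ M : ℝ≥0, μ Set.univ < M := by
    simpa using ENNReal.lt_iff_exists_nnreal_btwn.1 (measure_lt_top μ Set.univ)
  have hμsM : ∀ᶠ n in atTop, μs n Set.univ ≤ M :=
    ((hμ _ .univ).eventually_lt_const hM).mono fun _ => le_of_lt
  have happrox (ε : ℝ) (hε : 0 < ε) : ∃ φ : SimpleFunc Ω E,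
      (∀ᶠ n in atTop, ∫⁻ x, edist (fs n x) (φ x) ∂(μs n) ≤ ENNReal.ofReal ε) ∧
        ∫⁻ x, edist (f x) (φ x) ∂μ ≤ ENNReal.ofReal ε := by
    obtain ⟨φ, hφ⟩ :=
      hint.exists_simpleFunc_eventually_lintegral_edist_le huac hfs hlim hμsM hε
    exact ⟨φ, hφ, lintegral_edist_le_of_tendsto_measure hμ hfs hlim φ.stronglyMeasurable hφ⟩
  constructor
  · obtain ⟨φ, -, hφ⟩ := happrox 1 one_pos
    exact integrable_of_lintegral_edist_ne_top hf φ.integrable_of_isFiniteMeasure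
      (ne_top_of_le_ne_top ENNReal.ofReal_ne_top hφ)
  intro A hA
  refine tendsto_of_forall_exists_tendsto_dist_le fun ε hε => ?_
  obtain ⟨φ, hφs, hφ⟩ := happrox ε hε
  refine ⟨_, _, tendsto_setIntegral_simpleFunc_of_tendsto_measure hμ φ hA, ?_,
    dist_setIntegral_le_of_lintegral_edist_le hf φ.integrable_of_isFiniteMeasure hε.le hφ⟩
  filter_upwards [hφs] with n hφn
  exact dist_setIntegral_le_of_lintegral_edist_le (hfs n).aestronglyMeasurable
    φ.integrable_of_isFiniteMeasure hε.le hφn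

end SetwiseConvergence

theorem tendsto_setIntegral_of_vague_bounded_general
    {Ω E : Type*} [TopologicalSpace Ω] [LocallyCompactSpace Ω] [R1Space Ω]
    [MeasurableSpace Ω] [BorelSpace Ω] [NormedAddCommGroup E] [NormedSpace ℝ E] [CompleteSpace E]
    {μ : Measure Ω} {μs : ℕ → Measure Ω} [IsFiniteMeasure μ] [∀ n, IsFiniteMeasure (μs n)]
    [μ.InnerRegularCompactLTTop] {f : Ω → E} {fs : ℕ → Ω → E}
    (hfs : ∀ n, StronglyMeasurable (fs n))
    (hlim : ∀ᵐ x ∂μ, Tendsto (fun n => fs n x) atTop (𝓝 (f x)))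
    (hint : UniformlyAbsolutelyContinuousIntegrals fs μs)
    (hvague : ∀ g : C_c(Ω, ℝ), Tendsto (fun n => ∫ x, g x ∂(μs n)) atTop (𝓝 (∫ x, g x ∂μ)))
    (huac : UniformlyAbsolutelyContinuous μs μ) :
    Integrable f μ ∧ ∀ A, MeasurableSet A →
      Tendsto (fun n => ∫ x in A, fs n x ∂(μs n)) atTop (𝓝 (∫ x in A, f x ∂μ)) :=
  hint.integrable_and_tendsto_setIntegral huac
    (fun _ hA => huac.tendsto_measure_of_vague hvague hA) hfs hlim

/-- Variant of the main convergence theorem for a bounded continuous limit `f`: if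
`fₙ → f` `m`-a.e., `(fₙ)` has uniformly absolutely continuous `(mₙ)`-integrals, and
`(mₙ)` is vaguely convergent to the finite Radon measure `m` and uniformly absolutely
continuous with respect to `m`, then `∫_A fₙ dmₙ → ∫_A f dm` for every Borel set `A`. -/
theorem tendsto_setIntegral_of_vague_bounded
    {Ω : Type*} [TopologicalSpace Ω] [LocallyCompactSpace Ω] [T2Space Ω]
    [MeasurableSpace Ω] [BorelSpace Ω]
    (m : Measure Ω) (mseq : ℕ → Measure Ω)
    [IsFiniteMeasure m] (hfin : ∀ n, IsFiniteMeasure (mseq n))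
    (hRadon : m.InnerRegular)
    (f : Ω → ℝ) (fseq : ℕ → Ω → ℝ)
    (hmeas : ∀ n, Measurable (fseq n))
    (hfseqint : ∀ n, Integrable (fseq n) (mseq n))
    -- (i) pointwise a.e. convergence
    (hae : ∀ᵐ t ∂m, Tendsto (fun n => fseq n t) atTop (𝓝 (f t)))
    -- (ii) f continuous and bounded
    (hf : Continuous f) (hfb : ∃ C : ℝ, ∀ t, |f t| ≤ C)
    -- (iii) uniformly absolutely continuous (mₙ)-integrals of (fₙ)
    (huacseq : ∀ ε : ℝ, 0 < ε → ∃ δ : ℝ, 0 < δ ∧ ∀ n, ∀ A : Set Ω, MeasurableSet A →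
      mseq n A < ENNReal.ofReal δ → ∫ x in A, |fseq n x| ∂(mseq n) < ε)
    -- (iv) vague convergence and uniform absolute continuity of the measures
    (hvague : ∀ g : Ω → ℝ, Continuous g → Tendsto g (cocompact Ω) (𝓝 0) →
      Tendsto (fun n => ∫ x, g x ∂(mseq n)) atTop (𝓝 (∫ x, g x ∂m)))
    (huac : ∀ ε : ℝ, 0 < ε → ∃ δ : ℝ, 0 < δ ∧ ∀ E : Set Ω, MeasurableSet E →
      m E < ENNReal.ofReal δ → ∀ n, mseq n E < ENNReal.ofReal ε) :
    ∀ A : Set Ω, MeasurableSet A →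
      Tendsto (fun n => ∫ x in A, fseq n x ∂(mseq n)) atTop (𝓝 (∫ x in A, f x ∂m)) := by
  exact (tendsto_setIntegral_of_vague_bounded_general (fun n => (hmeas n).stronglyMeasurable) hae
    (uniformlyAbsolutelyContinuousIntegrals_of_integral_norm hfseqint huacseq)
    (fun g => hvague g g.continuous g.hasCompactSupport.is_zero_at_infty) huac).2
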